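/- arXiv:1703.01699 — 3 statements merged into one kernel-verified Lean document; each statement's English description precedes it below -/
import Mathlib

section
/- Let T > 0, ω ∈ ℝ, and let f : ℝ × ℝ × ℝⁿ → ℝⁿ be continuous and satisfy a Lipschitz condition in its third argument: there exists L > 0 such that ‖f(t,x,y) − f(t,x,z)‖_∞ ≤ L‖y − z‖_∞ for all t ∈ [0,T], x ∈ ℝ, y, z ∈ ℝⁿ. If y, z : [0,T] × ℝ → ℝⁿ are differentiable functions satisfying ∂y/∂t(t,x) + ω·∂y/∂x(t,x) = f(t, x, y(t,x)) and ∂z/∂t(t,x) + ω·∂z/∂x(t,x) = f(t, x, z(t,x)) for all (t,x) ∈ [0,T] × ℝ, and y(0,x) = z(0,x) for all x ∈ ℝ, then y(t,x) = z(t,x) for all (t,x) ∈ [0,T] × ℝ. -/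
open Set
open scoped NNReal

theorem hasDerivWithinAt_comp_add_smul {𝕜 E F : Type*} [NontriviallyNormedField 𝕜]
    [AddCommGroup E] [Module 𝕜 E] [NormedAddCommGroup F] [NormedSpace 𝕜 F] {u : E → F} {u' : F}
    {s : Set E} {p v : E} {t : 𝕜} (h : HasLineDerivWithinAt 𝕜 u u' s (p + t • v) v) :
    HasDerivWithinAt (fun r ↦ u (p + r • v)) u' ((fun r ↦ p + r • v) ⁻¹' s) t := by
  have shift (r : 𝕜) : p + t • v + (r - t) • v = p + r • v := by module
  have maps : MapsTo (fun r ↦ r - t) ((fun r ↦ p + r • v) ⁻¹' s)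
      ((fun r ↦ p + t • v + r • v) ⁻¹' s) := fun r hr ↦ by simpa only [mem_preimage, shift] using hr
  simpa only [Function.comp_def, shift, one_smul, id_eq] using
    HasDerivWithinAt.scomp_of_eq t h ((hasDerivWithinAt_id t _).sub_const t) maps (sub_self t).symm

section Advection

variable {E F : Type*} [NormedAddCommGroup F] [NormedSpace ℝ F]

/-- `u` solves the advection equation `∂u/∂t + ω · ∇u = f(t, x, u)` on `[0, T] × E`. The left-hand
side is encoded as the derivative of `u` in the direction `(1, ω)`, one-sided at `t = 0` and
`t = T`, so that `u` need only be differentiable along the characteristics. -/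
def IsAdvectionSolution [AddCommGroup E] [Module ℝ E] (T : ℝ) (ω : E) (f : ℝ → E → F → F)
    (u : ℝ × E → F) : Prop :=
  ∀ t ∈ Icc 0 T, ∀ x,
    HasLineDerivWithinAt ℝ u (f t x (u (t, x))) (Icc 0 T ×ˢ univ) (t, x) (1, ω)

namespace IsAdvectionSolution

theorem of_fderiv [NormedAddCommGroup E] [NormedSpace ℝ E] {T : ℝ} {ω : E} {f : ℝ → E → F → F}
    {u : ℝ × E → F} (hdiff : ∀ t ∈ Icc 0 T, ∀ x, DifferentiableAt ℝ u (t, x))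
    (hpde : ∀ t ∈ Icc 0 T, ∀ x, fderiv ℝ u (t, x) (1, ω) = f t x (u (t, x))) :
    IsAdvectionSolution T ω f u := fun t ht x ↦
  hpde t ht x ▸ ((hdiff t ht x).hasFDerivAt.hasLineDerivAt (1, ω)).hasLineDerivWithinAt _

variable [AddCommGroup E] [Module ℝ E] {T : ℝ} {ω : E} {f : ℝ → E → F → F} {u y z : ℝ × E → F}

theorem hasDerivWithinAt_characteristic (hu : IsAdvectionSolution T ω f u) (x : E) {t : ℝ}
    (ht : t ∈ Icc 0 T) :
    HasDerivWithinAt (fun s ↦ u (s, x + s • ω)) (f t (x + t • ω) (u (t, x + t • ω)))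
      (Icc 0 T) t := by
  have line (s : ℝ) : (0, x) + s • ((1 : ℝ), ω) = (s, x + s • ω) := by simp
  have strip : (fun s ↦ (s, x + s • ω)) ⁻¹' (Icc 0 T ×ˢ univ) = Icc 0 T := by ext; simp
  have hline := hu t ht (x + t • ω)
  rw [← line] at hline
  simpa only [line, strip] using hasDerivWithinAt_comp_add_smul hline

theorem eqOn_characteristic {K : ℝ≥0} (hf : ∀ t ∈ Icc 0 T, ∀ x, LipschitzWith K (f t x))
    (hy : IsAdvectionSolution T ω f y) (hz : IsAdvectionSolution T ω f z) {x : E}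
    (h0 : y (0, x) = z (0, x)) :
    EqOn (fun t ↦ y (t, x + t • ω)) (fun t ↦ z (t, x + t • ω)) (Icc 0 T) := by
  have continuousOn {u : ℝ × E → F} (hu : IsAdvectionSolution T ω f u) :
      ContinuousOn (fun t ↦ u (t, x + t • ω)) (Icc 0 T) :=
    fun t ht ↦ (hu.hasDerivWithinAt_characteristic x ht).continuousWithinAt
  have rightDeriv {u : ℝ × E → F} (hu : IsAdvectionSolution T ω f u) (t : ℝ) (ht : t ∈ Ico 0 T) :
      HasDerivWithinAt (fun s ↦ u (s, x + s • ω)) (f t (x + t • ω) (u (t, x + t • ω)))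
        (Ici t) t :=
    (hu.hasDerivWithinAt_characteristic x (Ico_subset_Icc_self ht)).mono_of_mem_nhdsWithin
      (Icc_mem_nhdsGE_of_mem ht)
  exact ODE_solution_unique_of_mem_Icc_right (v := fun t w ↦ f t (x + t • ω) w)
    (s := fun _ ↦ univ) (fun t ht ↦ (hf t (Ico_subset_Icc_self ht) _).lipschitzOnWith)
    (continuousOn hy) (rightDeriv hy) (fun _ _ ↦ mem_univ _)
    (continuousOn hz) (rightDeriv hz) (fun _ _ ↦ mem_univ _) (by simpa using h0)

end IsAdvectionSolution

theorem stmt_3_general [AddCommGroup E] [Module ℝ E] {T : ℝ} {ω : E} {f : ℝ → E → F → F}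
    {y z : ℝ × E → F} {K : ℝ≥0} (hf : ∀ t ∈ Icc 0 T, ∀ x, LipschitzWith K (f t x))
    (hy : IsAdvectionSolution T ω f y) (hz : IsAdvectionSolution T ω f z)
    (h0 : ∀ x, y (0, x) = z (0, x)) : ∀ t ∈ Icc 0 T, ∀ x, y (t, x) = z (t, x) := by
  intro t ht x
  -- The characteristic through `(t, x)` starts at `(0, x - t • ω)`.
  simpa using hy.eqOn_characteristic hf hz (h0 (x - t • ω)) ht

end Advection

/-- Uniqueness for the advection system with constant advection speed `ω`:
if `f` is continuous and Lipschitz in its third argument (max norm on `ℝⁿ`), and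
`y`, `z` are differentiable solutions of `∂y/∂t + ω ∂y/∂x = f(t,x,y)` on `[0,T] × ℝ`
with the same initial data at `t = 0`, then `y = z` on `[0,T] × ℝ`. -/
theorem stmt_3 (n : ℕ) (T ω : ℝ) (hT : 0 < T)
    (f : ℝ → ℝ → (Fin n → ℝ) → (Fin n → ℝ))
    (hf_cont : Continuous fun p : ℝ × ℝ × (Fin n → ℝ) => f p.1 p.2.1 p.2.2)
    (L : ℝ) (hL : 0 < L)
    (hf_lip : ∀ t ∈ Set.Icc (0 : ℝ) T, ∀ (x : ℝ) (w w' : Fin n → ℝ),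
      ‖f t x w - f t x w'‖ ≤ L * ‖w - w'‖)
    (y z : ℝ × ℝ → (Fin n → ℝ))
    (hy_diff : ∀ t ∈ Set.Icc (0 : ℝ) T, ∀ x : ℝ, DifferentiableAt ℝ y (t, x))
    (hz_diff : ∀ t ∈ Set.Icc (0 : ℝ) T, ∀ x : ℝ, DifferentiableAt ℝ z (t, x))
    (hy_pde : ∀ t ∈ Set.Icc (0 : ℝ) T, ∀ x : ℝ,
      fderiv ℝ y (t, x) (1, ω) = f t x (y (t, x)))
    (hz_pde : ∀ t ∈ Set.Icc (0 : ℝ) T, ∀ x : ℝ,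
      fderiv ℝ z (t, x) (1, ω) = f t x (z (t, x)))
    (h0 : ∀ x : ℝ, y (0, x) = z (0, x)) :
    ∀ t ∈ Set.Icc (0 : ℝ) T, ∀ x : ℝ, y (t, x) = z (t, x) := by
  exact stmt_3_general
    (fun t ht x ↦ .of_dist_le' <| by simpa only [dist_eq_norm] using hf_lip t ht x)
    (.of_fderiv hy_diff hy_pde) (.of_fderiv hz_diff hz_pde) h0
end

section
/- Let T > 0, ω ∈ ℝ, let f : ℝ × ℝ × ℝⁿ → ℝⁿ be twice continuously differentiable with all partial derivatives up to order two bounded, and let y : [0,T] × ℝ → ℝⁿ be a three-times continuously differentiable solution of ∂y/∂t + ω·∂y/∂x = f(t, x, y(t,x)) on [0,T] × ℝ with all partial derivatives up to order three bounded. Then there exists a constant C ≥ 0 such that for all t, τ with 0 ≤ t ≤ t + τ ≤ T and all x ∈ ℝ, setting Y_D = y(t, x − ωτ), k₁ = f(t, x − ωτ, Y_D), and k₂ = f(t + τ, x, Y_D + τ·k₁), one has ‖y(t+τ, x) − Y_D − (τ/2)·(k₁ + k₂)‖_∞ ≤ C·τ³. In particular, the local truncation error of the modified semi-Lagrangian Euler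 method, i.e. this one-step error divided by τ, is O(τ²). -/
/-!
Along the characteristic line `s ↦ (s, ξ + s • ω)` the advection system is an ordinary differential
equation, and the method is one step of Heun's method for it. Replacing the Euler predictor inside
`k₂` by the exact value turns the step into the trapezoidal rule. By Taylor's theorem the
trapezoidal rule and the predictor are off by `O(τ³)` and `O(τ²)`; the latter enters through the
Lipschitz function `f (t + τ) x` with the weight `τ / 2`, which supplies the missing power of `τ`.
-/

open Set
open scoped NNReal

section OneVariable

variable {F : Type*} [NormedAddCommGroup F] [NormedSpace ℝ F] {u : ℝ → F} {a b M : ℝ}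

theorem norm_sub_taylor_one_le (hab : a ≤ b) (hu : ContDiffOn ℝ 2 u (Icc a b))
    (hM : ∀ s ∈ Icc a b, ‖iteratedDerivWithin 2 u (Icc a b) s‖ ≤ M) :
    ‖u b - (u a + (b - a) • derivWithin u (Icc a b) a)‖ ≤ M * (b - a) ^ 2 := by
  simpa [taylorWithinEval_succ, iteratedDerivWithin_one] using
    taylor_mean_remainder_bound (n := 1) hab (by norm_num; exact hu) (right_mem_Icc.2 hab) hM

theorem norm_sub_taylor_two_le (hab : a ≤ b) (hu : ContDiffOn ℝ 3 u (Icc a b))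
    (hM : ∀ s ∈ Icc a b, ‖iteratedDerivWithin 3 u (Icc a b) s‖ ≤ M) :
    ‖u b - (u a + (b - a) • derivWithin u (Icc a b) a
        + ((b - a) ^ 2 / 2) • iteratedDerivWithin 2 u (Icc a b) a)‖ ≤ M * (b - a) ^ 3 / 2 := by
  simpa [taylorWithinEval_succ, iteratedDerivWithin_one, div_eq_inv_mul, one_add_one_eq_two] using
    taylor_mean_remainder_bound (n := 2) hab (by norm_num; exact hu) (right_mem_Icc.2 hab) hM

theorem norm_sub_trapezoid_le (hab : a < b) (hu : ContDiffOn ℝ 3 u (Icc a b))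
    (hM : ∀ s ∈ Icc a b, ‖iteratedDerivWithin 3 u (Icc a b) s‖ ≤ M) :
    ‖u b - u a - ((b - a) / 2) • (derivWithin u (Icc a b) a + derivWithin u (Icc a b) b)‖
      ≤ M * (b - a) ^ 3 := by
  set u' := derivWithin u (Icc a b)
  set u''a := iteratedDerivWithin 2 u (Icc a b) a with hu''a
  have hu' : ContDiffOn ℝ 2 u' (Icc a b) :=
    hu.derivWithin (uniqueDiffOn_Icc hab) (by norm_num)
  have taylor_u : ‖u b - (u a + (b - a) • u' a + ((b - a) ^ 2 / 2) • u''a)‖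
      ≤ M * (b - a) ^ 3 / 2 := norm_sub_taylor_two_le hab.le hu hM
  have taylor_u' : ‖u' b - (u' a + (b - a) • u''a)‖ ≤ M * (b - a) ^ 2 := by
    rw [hu''a, iteratedDerivWithin_succ', iteratedDerivWithin_one]
    refine norm_sub_taylor_one_le hab.le hu' fun s hs ↦ ?_
    rw [← iteratedDerivWithin_succ']
    exact hM s hs
  have hba : 0 ≤ (b - a) / 2 := by linarith
  calc ‖u b - u a - ((b - a) / 2) • (u' a + u' b)‖
      = ‖u b - (u a + (b - a) • u' a + ((b - a) ^ 2 / 2) • u''a)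
          - ((b - a) / 2) • (u' b - (u' a + (b - a) • u''a))‖ := by congr 1; module
    _ ≤ M * (b - a) ^ 3 / 2 + (b - a) / 2 * (M * (b - a) ^ 2) := by
        grw [norm_sub_le, taylor_u, norm_smul, Real.norm_of_nonneg hba, taylor_u']
    _ = M * (b - a) ^ 3 := by ring

/-- One step of size `τ` of Heun's method (the explicit trapezoidal rule, a Runge–Kutta method of
order two) for `u' = φ(s, u)`, started from the value `u₀` at time `t`. -/
noncomputable def heunStep (φ : ℝ → F → F) (t τ : ℝ) (u₀ : F) : F :=
  u₀ + (τ / 2) • (φ t u₀ + φ (t + τ) (u₀ + τ • φ t u₀))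

theorem norm_sub_heunStep_le {φ : ℝ → F → F} {t τ M₂ M₃ : ℝ} {K : ℝ≥0} (hτ : 0 < τ)
    (hu : ContDiffOn ℝ 3 u (Icc t (t + τ))) (hode : IsIntegralCurveOn u φ (Icc t (t + τ)))
    (hφ : LipschitzWith K (φ (t + τ)))
    (hM₂ : ∀ s ∈ Icc t (t + τ), ‖iteratedDerivWithin 2 u (Icc t (t + τ)) s‖ ≤ M₂)
    (hM₃ : ∀ s ∈ Icc t (t + τ), ‖iteratedDerivWithin 3 u (Icc t (t + τ)) s‖ ≤ M₃) :
    ‖u (t + τ) - heunStep φ t τ (u t)‖ ≤ (M₃ + K * M₂ / 2) * τ ^ 3 := by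
  have hlt : t < t + τ := lt_add_of_pos_right t hτ
  have hderiv : ∀ s ∈ Icc t (t + τ), derivWithin u (Icc t (t + τ)) s = φ s (u s) :=
    fun s hs ↦ (hode s hs).derivWithin (uniqueDiffOn_Icc hlt s hs)
  set k₁ := φ t (u t)
  set k₂ := φ (t + τ) (u t + τ • k₁)
  have trapezoid : ‖u (t + τ) - u t - (τ / 2) • (k₁ + φ (t + τ) (u (t + τ)))‖ ≤ M₃ * τ ^ 3 := by
    simpa [hderiv _ (left_mem_Icc.2 hlt.le), hderiv _ (right_mem_Icc.2 hlt.le)]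
      using norm_sub_trapezoid_le hlt hu hM₃
  have predictor : ‖u (t + τ) - (u t + τ • k₁)‖ ≤ M₂ * τ ^ 2 := by
    simpa [hderiv _ (left_mem_Icc.2 hlt.le)]
      using norm_sub_taylor_one_le hlt.le (hu.of_le (by norm_num)) hM₂
  have stage : ‖φ (t + τ) (u (t + τ)) - k₂‖ ≤ K * (M₂ * τ ^ 2) := by
    grw [hφ.norm_sub_le, predictor]
  calc ‖u (t + τ) - heunStep φ t τ (u t)‖
      = ‖(u (t + τ) - u t - (τ / 2) • (k₁ + φ (t + τ) (u (t + τ))))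
          + (τ / 2) • (φ (t + τ) (u (t + τ)) - k₂)‖ := by
        congr 1; simp only [heunStep]; module
    _ ≤ M₃ * τ ^ 3 + τ / 2 * (K * (M₂ * τ ^ 2)) := by
        grw [norm_add_le, trapezoid, norm_smul, Real.norm_of_nonneg (by positivity), stage]
    _ = (M₃ + K * M₂ / 2) * τ ^ 3 := by ring

end OneVariable

theorem norm_iteratedDeriv_comp_add_smul_le {𝕜 E F : Type*} [NontriviallyNormedField 𝕜]
    [NormedAddCommGroup E] [NormedSpace 𝕜 E] [NormedAddCommGroup F] [NormedSpace 𝕜 F]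
    {y : E → F} {k : ℕ} (hy : ContDiff 𝕜 k y) (p v : E) (s : 𝕜) :
    ‖iteratedDeriv k (fun r : 𝕜 ↦ y (p + r • v)) s‖
      ≤ ‖iteratedFDeriv 𝕜 k y (p + s • v)‖ * ‖v‖ ^ k := by
  have hcomp : iteratedFDeriv 𝕜 k (fun r : 𝕜 ↦ y (p + r • v)) s =
      (iteratedFDeriv 𝕜 k y (p + s • v)).compContinuousLinearMap
        fun _ ↦ ContinuousLinearMap.toSpanSingleton 𝕜 v := by
    rw [← iteratedFDeriv_comp_add_left]
    exact (ContinuousLinearMap.toSpanSingleton 𝕜 v).iteratedFDeriv_comp_right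
      (f := fun z ↦ y (p + z)) (by fun_prop) s le_rfl
  rw [← norm_iteratedFDeriv_eq_norm_iteratedDeriv, hcomp]
  simpa using ContinuousMultilinearMap.norm_compContinuousLinearMap_le
    (iteratedFDeriv 𝕜 k y (p + s • v)) fun _ ↦ ContinuousLinearMap.toSpanSingleton 𝕜 v

theorem lipschitzWith_of_norm_iteratedFDeriv_one_le {𝕜 E F : Type*} [RCLike 𝕜]
    [NormedAddCommGroup E] [NormedSpace 𝕜 E] [NormedAddCommGroup F] [NormedSpace 𝕜 F]
    {g : E → F} {B : ℝ} (hg : Differentiable 𝕜 g) (hB : ∀ p, ‖iteratedFDeriv 𝕜 1 g p‖ ≤ B) :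
    LipschitzWith B.toNNReal g :=
  lipschitzWith_of_nnnorm_fderiv_le hg fun p ↦
    NNReal.le_toNNReal_of_coe_le ((norm_iteratedFDeriv_one g).symm.trans_le (hB p))

theorem lipschitzWith_curry_of_norm_iteratedFDeriv_one_le {𝕜 E₁ E₂ E₃ F : Type*} [RCLike 𝕜]
    [NormedAddCommGroup E₁] [NormedSpace 𝕜 E₁] [NormedAddCommGroup E₂] [NormedSpace 𝕜 E₂]
    [NormedAddCommGroup E₃] [NormedSpace 𝕜 E₃] [NormedAddCommGroup F] [NormedSpace 𝕜 F]
    {g : E₁ → E₂ → E₃ → F} {B : ℝ}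
    (hg : Differentiable 𝕜 fun p : E₁ × E₂ × E₃ ↦ g p.1 p.2.1 p.2.2)
    (hB : ∀ p, ‖iteratedFDeriv 𝕜 1 (fun p : E₁ × E₂ × E₃ ↦ g p.1 p.2.1 p.2.2) p‖ ≤ B)
    (a : E₁) (b : E₂) : LipschitzWith B.toNNReal (g a b) := by
  simpa using! (lipschitzWith_of_norm_iteratedFDeriv_one_le hg hB).comp
    ((LipschitzWith.prodMk_left a).comp (LipschitzWith.prodMk_left b))

section Advection

variable {E F : Type*} [NormedAddCommGroup E] [NormedSpace ℝ E] [NormedAddCommGroup F]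
  [NormedSpace ℝ F] {y : ℝ × E → F} {f : ℝ → E → F → F} {ω : E}

theorem isIntegralCurveOn_characteristic {J : Set ℝ} (hy : Differentiable ℝ y)
    (hpde : ∀ s ∈ J, ∀ x, fderiv ℝ y (s, x) (1, ω) = f s x (y (s, x))) (ξ : E) :
    IsIntegralCurveOn (fun s ↦ y (s, ξ + s • ω)) (fun s ↦ f s (ξ + s • ω)) J := by
  intro s hs
  have hline : HasDerivAt (fun r : ℝ ↦ (r, ξ + r • ω)) (1, ω) s := by
    simpa using (hasDerivAt_id s).prodMk (((hasDerivAt_id s).smul_const ω).const_add ξ)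
  simp only [← hpde s hs]
  exact ((hy _).hasFDerivAt.comp_hasDerivAt s hline).hasDerivWithinAt

theorem norm_iteratedDeriv_characteristic_le {k : ℕ} (hy : ContDiff ℝ k y) (ξ : E) (s : ℝ) :
    ‖iteratedDeriv k (fun r : ℝ ↦ y (r, ξ + r • ω)) s‖
      ≤ ‖iteratedFDeriv ℝ k y (s, ξ + s • ω)‖ * ‖((1, ω) : ℝ × E)‖ ^ k := by
  simpa using norm_iteratedDeriv_comp_add_smul_le hy (0, ξ) (1, ω) s

theorem norm_sub_heunStep_characteristic_le {t τ M : ℝ} {K : ℝ≥0} (hτ : 0 < τ) (ξ : E)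
    (hf : LipschitzWith K (f (t + τ) (ξ + (t + τ) • ω))) (hy : ContDiff ℝ 3 y)
    (hM : ∀ j : ℕ, 2 ≤ j → j ≤ 3 → ∀ s ∈ Icc t (t + τ), ∀ x, ‖iteratedFDeriv ℝ j y (s, x)‖ ≤ M)
    (hpde : ∀ s ∈ Icc t (t + τ), ∀ x, fderiv ℝ y (s, x) (1, ω) = f s x (y (s, x))) :
    ‖y (t + τ, ξ + (t + τ) • ω) - heunStep (fun s ↦ f s (ξ + s • ω)) t τ (y (t, ξ + t • ω))‖
      ≤ (M * ‖((1, ω) : ℝ × E)‖ ^ 3 + K * (M * ‖((1, ω) : ℝ × E)‖ ^ 2) / 2) * τ ^ 3 := by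
  have hu : ContDiff ℝ 3 fun s : ℝ ↦ y (s, ξ + s • ω) := by fun_prop
  have hbound (j : ℕ) (h2 : 2 ≤ j) (h3 : j ≤ 3) : ∀ s ∈ Icc t (t + τ),
      ‖iteratedDerivWithin j (fun s : ℝ ↦ y (s, ξ + s • ω)) (Icc t (t + τ)) s‖
        ≤ M * ‖((1, ω) : ℝ × E)‖ ^ j := by
    intro s hs
    have hj : (j : WithTop ℕ∞) ≤ 3 := mod_cast h3
    rw [iteratedDerivWithin_eq_iteratedDeriv (uniqueDiffOn_Icc (lt_add_of_pos_right t hτ))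
      (hu.of_le hj).contDiffAt hs]
    grw [norm_iteratedDeriv_characteristic_le (hy.of_le hj), hM j h2 h3 s hs]
  exact norm_sub_heunStep_le hτ hu.contDiffOn
    (isIntegralCurveOn_characteristic (hy.differentiable (by norm_num)) hpde ξ) hf
    (hbound 2 le_rfl (by norm_num)) (hbound 3 (by norm_num) le_rfl)

theorem stmt_11_general {T : ℝ}
    (hf : ∃ K : ℝ≥0, ∀ t ∈ Icc 0 T, ∀ x, LipschitzWith K (f t x)) (hy : ContDiff ℝ 3 y)
    (hyb : ∃ M : ℝ, ∀ j : ℕ, 2 ≤ j → j ≤ 3 → ∀ t ∈ Icc 0 T, ∀ x,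
      ‖iteratedFDeriv ℝ j y (t, x)‖ ≤ M)
    (hpde : ∀ t ∈ Icc 0 T, ∀ x, fderiv ℝ y (t, x) (1, ω) = f t x (y (t, x))) :
    ∃ C : ℝ, 0 ≤ C ∧ ∀ (t τ : ℝ) (x : E), 0 ≤ t → 0 ≤ τ → t + τ ≤ T →
      let YD := y (t, x - τ • ω)
      let k₁ := f t (x - τ • ω) YD
      let k₂ := f (t + τ) x (YD + τ • k₁)
      ‖y (t + τ, x) - YD - (τ / 2) • (k₁ + k₂)‖ ≤ C * τ ^ 3 := by
  obtain ⟨K, hK⟩ := hf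
  obtain ⟨M, hM⟩ := hyb
  refine ⟨|M| * ‖((1, ω) : ℝ × E)‖ ^ 3 + K * (|M| * ‖((1, ω) : ℝ × E)‖ ^ 2) / 2, by positivity,
    fun t τ x ht hτ htT ↦ ?_⟩
  obtain rfl | hτ := hτ.eq_or_lt
  · simp
  have hsub : Icc t (t + τ) ⊆ Icc 0 T := Icc_subset_Icc ht htT
  have hdeparture : x - (t + τ) • ω + t • ω = x - τ • ω := by module
  have hstep := norm_sub_heunStep_characteristic_le hτ (x - (t + τ) • ω)
    (hK (t + τ) ⟨by positivity, htT⟩ _) hy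
    (fun j h2 h3 s hs x ↦ (hM j h2 h3 s (hsub hs) x).trans (le_abs_self M))
    (fun s hs ↦ hpde s (hsub hs))
  simpa only [heunStep, sub_add_cancel, hdeparture, ← sub_sub] using hstep

end Advection

/-- Local truncation error of the modified semi-Lagrangian Euler method (Algorithm 2)
for constant advection speed `ω`: if `f` is `C²` with bounded derivatives up to order
two and `y` is a `C³` solution of `∂y/∂t + ω ∂y/∂x = f(t,x,y)` on `[0,T] × ℝ` with
bounded derivatives up to order three, then there is `C ≥ 0` such that the one-step
error of the trapezoidal (RK2) update along the characteristic is at most `Cτ³`;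
i.e. the local truncation error is `O(τ²)`. -/
theorem stmt_11 (n : ℕ) (T ω : ℝ) (hT : 0 < T)
    (f : ℝ → ℝ → (Fin n → ℝ) → (Fin n → ℝ))
    (hf : ContDiff ℝ 2 fun p : ℝ × ℝ × (Fin n → ℝ) => f p.1 p.2.1 p.2.2)
    (hfb : ∃ B : ℝ, ∀ j : ℕ, 1 ≤ j → j ≤ 2 → ∀ p : ℝ × ℝ × (Fin n → ℝ),
      ‖iteratedFDeriv ℝ j (fun q : ℝ × ℝ × (Fin n → ℝ) => f q.1 q.2.1 q.2.2) p‖ ≤ B)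
    (y : ℝ × ℝ → (Fin n → ℝ))
    (hy : ContDiff ℝ 3 y)
    (hyb : ∃ B : ℝ, ∀ j : ℕ, 1 ≤ j → j ≤ 3 → ∀ p : ℝ × ℝ,
      ‖iteratedFDeriv ℝ j y p‖ ≤ B)
    (hpde : ∀ t ∈ Set.Icc (0 : ℝ) T, ∀ x : ℝ,
      fderiv ℝ y (t, x) (1, ω) = f t x (y (t, x))) :
    ∃ C : ℝ, 0 ≤ C ∧ ∀ (t τ x : ℝ), 0 ≤ t → 0 ≤ τ → t + τ ≤ T →
      let YD := y (t, x - ω * τ)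
      let k₁ := f t (x - ω * τ) YD
      let k₂ := f (t + τ) x (YD + τ • k₁)
      ‖y (t + τ, x) - YD - (τ / 2) • (k₁ + k₂)‖ ≤ C * τ ^ 3 := by
  obtain ⟨B, hB⟩ := hfb
  obtain ⟨M, hM⟩ := hyb
  have hlip := lipschitzWith_curry_of_norm_iteratedFDeriv_one_le
    (hf.differentiable (by norm_num)) (hB 1 le_rfl (by norm_num))
  simpa only [smul_eq_mul, mul_comm ω] using stmt_11_general ⟨_, fun t _ x ↦ hlip t x⟩ hy
    ⟨M, fun j h2 h3 t _ x ↦ hM j (one_le_two.trans h2) h3 (t, x)⟩ hpde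
end

section
/- Let T > 0, ω ∈ ℝ, let f : ℝ × ℝ × ℝⁿ → ℝⁿ be three-times continuously differentiable with all partial derivatives up to order three bounded, and let y : [0,T] × ℝ → ℝⁿ be a four-times continuously differentiable solution of ∂y/∂t + ω·∂y/∂x = f(t, x, y(t,x)) on [0,T] × ℝ with all partial derivatives up to order four bounded. Then there exists a constant C ≥ 0 such that for all t, τ with 0 ≤ t ≤ t + τ ≤ T and all x ∈ ℝ, setting Y_D = y(t, x − ωτ), k₁ = f(t, x − ωτ, Y_D), k₂ = f(t + τ/2, x − ωτ/2, Y_D + (τ/2)·k₁), and k₃ = f(t + τ, x, Y_D − τ·k₁ + 2τ·k₂), one has ‖y(t+τ, x) − Y_D − (τ/6)·(k₁ + 4k₂ + k₃)‖_∞ ≤ C·τ⁴. In particular, the local truncation error of the semi-Lagrangian Runge–Kutta order-3 method, i.e. this one-step error divided by τ, is O(τ³). -/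
/-!
Along a characteristic line the equation becomes an ordinary differential equation `u' = F(s, u)`,
and the scheme becomes one step of Kutta's method for it. With the exact slopes, the step is
Simpson's rule for `∫ u'`, which is accurate to `O(h⁴)`, so it suffices that the errors of the
three slopes contribute `O(h³)` to their weighted sum `k₁ + 4k₂ + k₃`. The arguments of `k₂` and
`k₃` carry errors `e₂` and `e₃` of size `O(h²)` only, but `4e₂ + e₃ = O(h³)`. Linearising `F` at the
solution therefore makes the leading parts of the slope errors cancel, and what remains is quadratic
in `e₂`, `e₃` or comes from the variation of the derivative of `F` over the step.
-/

open scoped Nat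

section BoundedDerivatives

variable {V W E : Type*} [NormedAddCommGroup V] [NormedSpace ℝ V] [NormedAddCommGroup W]
  [NormedSpace ℝ W] [NormedAddCommGroup E] [NormedSpace ℝ E]

/-- `g` is of class `C^m` and its derivatives of orders `1, …, m` are bounded by `B`. The
function `g` itself need not be bounded. -/
structure HasBoundedDerivs (m : ℕ) (B : ℝ) (g : V → E) : Prop where
  contDiff : ContDiff ℝ m g
  norm_iteratedFDeriv_le : ∀ j, 1 ≤ j → j ≤ m → ∀ p, ‖iteratedFDeriv ℝ j g p‖ ≤ B

namespace HasBoundedDerivs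

variable {m k : ℕ} {B : ℝ} {g : V → E}

theorem of_le (hg : HasBoundedDerivs m B g) (hkm : k ≤ m) : HasBoundedDerivs k B g :=
  ⟨hg.contDiff.of_le (mod_cast hkm),
    fun j hj hjk => hg.norm_iteratedFDeriv_le j hj (hjk.trans hkm)⟩

protected theorem differentiable (hg : HasBoundedDerivs (m + 1) B g) : Differentiable ℝ g :=
  hg.contDiff.differentiable (by simp)

theorem norm_fderiv_le (hg : HasBoundedDerivs (m + 1) B g) (p : V) : ‖fderiv ℝ g p‖ ≤ B := by
  rw [← norm_iteratedFDeriv_one]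
  exact hg.norm_iteratedFDeriv_le 1 le_rfl (by simp) p

theorem bound_nonneg (hg : HasBoundedDerivs (m + 1) B g) : 0 ≤ B :=
  (norm_nonneg _).trans (hg.norm_fderiv_le 0)

protected theorem fderiv (hg : HasBoundedDerivs (m + 1) B g) :
    HasBoundedDerivs m B (fderiv ℝ g) where
  contDiff := hg.contDiff.fderiv_right (by simp)
  norm_iteratedFDeriv_le j _ hjm p := by
    rw [norm_iteratedFDeriv_fderiv]
    exact hg.norm_iteratedFDeriv_le (j + 1) (by simp) (by simpa using hjm) p

protected theorem norm_sub_le (hg : HasBoundedDerivs (m + 1) B g) (p q : V) :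
    ‖g q - g p‖ ≤ B * ‖q - p‖ :=
  convex_univ.norm_image_sub_le_of_norm_fderiv_le (fun x _ => hg.differentiable x)
    (fun x _ => hg.norm_fderiv_le x) (Set.mem_univ p) (Set.mem_univ q)

theorem norm_add_sub_sub_fderiv_le (hg : HasBoundedDerivs 2 B g) (p v : V) :
    ‖g (p + v) - g p - fderiv ℝ g p v‖ ≤ B * ‖v‖ ^ 2 := by
  have hB := hg.bound_nonneg
  have fderiv_near : ∀ q ∈ Metric.closedBall p ‖v‖,
      ‖fderiv ℝ g q - fderiv ℝ g p‖ ≤ B * ‖v‖ := fun q hq =>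
    (hg.fderiv.norm_sub_le p q).trans (by gcongr; exact mem_closedBall_iff_norm.1 hq)
  have mean_value := (convex_closedBall p ‖v‖).norm_image_sub_le_of_norm_fderiv_le'
    (fun q _ => hg.differentiable q) fderiv_near (x := p) (y := p + v) (by simp) (by simp)
  simpa only [add_sub_cancel_left, mul_assoc, ← sq] using mean_value

theorem norm_smul_increment_add_increment_le (hg : HasBoundedDerivs 2 B g) (c : ℝ)
    (p q v w : V) :
    ‖c • (g (p + v) - g p) + (g (q + w) - g q)‖ ≤
      B * (|c| * ‖v‖ ^ 2 + ‖w‖ ^ 2 + ‖c • v + w‖ + ‖q - p‖ * ‖w‖) := by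
  set A := fderiv ℝ g p
  set A' := fderiv ℝ g q
  have split : c • (g (p + v) - g p) + (g (q + w) - g q) =
      c • (g (p + v) - g p - A v) + (g (q + w) - g q - A' w) + A (c • v + w) + (A' - A) w := by
    simp only [map_add, map_smul, sub_apply]
    module
  have remainder_p : ‖c • (g (p + v) - g p - A v)‖ ≤ |c| * (B * ‖v‖ ^ 2) := by
    rw [norm_smul, Real.norm_eq_abs]
    gcongr
    exact hg.norm_add_sub_sub_fderiv_le p v
  have remainder_q := hg.norm_add_sub_sub_fderiv_le q w
  have linear_part : ‖A (c • v + w)‖ ≤ B * ‖c • v + w‖ :=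
    A.le_of_opNorm_le (hg.norm_fderiv_le p) _
  have change_of_fderiv : ‖(A' - A) w‖ ≤ B * ‖q - p‖ * ‖w‖ :=
    (A' - A).le_of_opNorm_le (hg.fderiv.norm_sub_le p q) w
  rw [split]
  linarith [norm_add₄_le (a := c • (g (p + v) - g p - A v)) (b := g (q + w) - g q - A' w)
    (c := A (c • v + w)) (d := (A' - A) w)]

theorem comp_const_add_clm (hg : HasBoundedDerivs m B g) (c : V) (l : W →L[ℝ] V) :
    HasBoundedDerivs m (B * max 1 ‖l‖ ^ m) fun p => g (c + l p) where
  contDiff := hg.contDiff.comp (by fun_prop)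
  norm_iteratedFDeriv_le j hj hjm p := by
    have hshift : ContDiff ℝ m fun q => g (c + q) := hg.contDiff.comp (by fun_prop)
    have hB : 0 ≤ B := (norm_nonneg _).trans (hg.norm_iteratedFDeriv_le j hj hjm 0)
    have comp_eq : (fun p => g (c + l p)) = (fun q => g (c + q)) ∘ l := rfl
    calc ‖iteratedFDeriv ℝ j (fun p => g (c + l p)) p‖
        = ‖(iteratedFDeriv ℝ j g (c + l p)).compContinuousLinearMap fun _ => l‖ := by
          rw [comp_eq, l.iteratedFDeriv_comp_right hshift p (mod_cast hjm),
            iteratedFDeriv_comp_add_left]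
      _ ≤ ‖iteratedFDeriv ℝ j g (c + l p)‖ * ‖l‖ ^ j := by
          simpa using ContinuousMultilinearMap.norm_compContinuousLinearMap_le
            (iteratedFDeriv ℝ j g (c + l p)) fun _ => l
      _ ≤ B * max 1 ‖l‖ ^ m := by
          gcongr
          · exact hg.norm_iteratedFDeriv_le j hj hjm _
          · calc ‖l‖ ^ j ≤ max 1 ‖l‖ ^ j := by gcongr; exact le_max_right _ _
              _ ≤ max 1 ‖l‖ ^ m := pow_le_pow_right₀ (le_max_left _ _) hjm

end HasBoundedDerivs

end BoundedDerivatives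

section Curves

variable {E : Type*} [NormedAddCommGroup E] [NormedSpace ℝ E] {m : ℕ} {M h : ℝ} {u : ℝ → E}

namespace HasBoundedDerivs

protected theorem deriv (hu : HasBoundedDerivs (m + 1) M u) : HasBoundedDerivs m M (deriv u) where
  contDiff := (contDiff_succ_iff_deriv.1 hu.contDiff).2.2
  norm_iteratedFDeriv_le j _ hjm s := by
    rw [norm_iteratedFDeriv_eq_norm_iteratedDeriv, ← iteratedDeriv_succ',
      ← norm_iteratedFDeriv_eq_norm_iteratedDeriv]
    exact hu.norm_iteratedFDeriv_le (j + 1) (by simp) (by simpa using hjm) s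

theorem norm_sub_taylor_le (hu : HasBoundedDerivs (m + 1) M u) (t : ℝ) (hh : 0 ≤ h) :
    ‖u (t + h) - ∑ i ∈ Finset.range (m + 1), (h ^ i / i !) • iteratedDeriv i u t‖ ≤
      M * h ^ (m + 1) / m ! := by
  rcases hh.eq_or_lt with rfl | hpos
  · simp [Finset.sum_range_succ']
  have hlt : t < t + h := by linarith
  have within_eq : ∀ i ≤ m + 1, ∀ s ∈ Set.Icc t (t + h),
      iteratedDerivWithin i u (Set.Icc t (t + h)) s = iteratedDeriv i u s := fun i hi s hs =>
    iteratedDerivWithin_eq_iteratedDeriv (uniqueDiffOn_Icc hlt)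
      (hu.contDiff.of_le (mod_cast hi)).contDiffAt hs
  have remainder := taylor_mean_remainder_bound (C := M) hlt.le
    (mod_cast hu.contDiff.contDiffOn) (Set.right_mem_Icc.2 hlt.le) fun s hs => by
      rw [within_eq _ le_rfl s hs, ← norm_iteratedFDeriv_eq_norm_iteratedDeriv]
      exact hu.norm_iteratedFDeriv_le (m + 1) (by simp) le_rfl s
  rw [taylor_within_apply, add_sub_cancel_left] at remainder
  convert remainder using 3
  refine Finset.sum_congr rfl fun i hi => ?_
  rw [within_eq i (Finset.mem_range.1 hi).le t (Set.left_mem_Icc.2 hlt.le), div_eq_inv_mul]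

theorem norm_sub_taylor_one_le (hu : HasBoundedDerivs 2 M u) (t : ℝ) (hh : 0 ≤ h) :
    ‖u (t + h) - (u t + h • deriv u t)‖ ≤ M * h ^ 2 := by
  simpa [Finset.sum_range_succ] using hu.norm_sub_taylor_le t hh

theorem norm_sub_taylor_two_le (hu : HasBoundedDerivs 3 M u) (t : ℝ) (hh : 0 ≤ h) :
    ‖u (t + h) - (u t + h • deriv u t + (h ^ 2 / 2) • deriv (deriv u) t)‖ ≤ M * h ^ 3 / 2 := by
  simpa [Finset.sum_range_succ, iteratedDeriv_eq_iterate] using hu.norm_sub_taylor_le t hh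

theorem norm_sub_taylor_three_le (hu : HasBoundedDerivs 4 M u) (t : ℝ) (hh : 0 ≤ h) :
    ‖u (t + h) - (u t + h • deriv u t + (h ^ 2 / 2) • deriv (deriv u) t +
      (h ^ 3 / 6) • deriv (deriv (deriv u)) t)‖ ≤ M * h ^ 4 / 6 := by
  simpa [Finset.sum_range_succ, iteratedDeriv_eq_iterate, Nat.factorial] using
    hu.norm_sub_taylor_le t hh

theorem norm_sub_simpson_le (hu : HasBoundedDerivs 4 M u) (t : ℝ) (hh : 0 ≤ h) :
    ‖u (t + h) - u t - (h / 6) • (deriv u t + (4 : ℝ) • deriv u (t + h / 2) + deriv u (t + h))‖ ≤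
      M * h ^ 4 := by
  have hM := hu.bound_nonneg
  have hR := hu.norm_sub_taylor_three_le t hh
  have hR₁ := hu.deriv.norm_sub_taylor_two_le t hh
  have hR₂ := hu.deriv.norm_sub_taylor_two_le t (div_nonneg hh zero_le_two)
  set R := u (t + h) - (_ + _)
  set R₁ := deriv u (t + h) - _
  set R₂ := deriv u (t + h / 2) - _
  calc _ = ‖R - (h / 6) • ((4 : ℝ) • R₂ + R₁)‖ := by congr 1; module
    _ ≤ ‖R‖ + h / 6 * (4 * ‖R₂‖ + ‖R₁‖) := by
        grw [norm_sub_le, norm_smul, norm_add_le, norm_smul]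
        simp [abs_of_nonneg hh]
    _ ≤ M * h ^ 4 / 6 + h / 6 * (4 * (M * (h / 2) ^ 3 / 2) + M * h ^ 3 / 2) := by gcongr
    _ = 7 / 24 * (M * h ^ 4) := by ring
    _ ≤ M * h ^ 4 := by linarith [show 0 ≤ M * h ^ 4 by positivity]

/-- The combination vanishes for quadratic polynomials `u`; it is `4e₂ + e₃` up to sign when the
midpoint slope is exact, where `e₂`, `e₃` are the errors of the stages of Kutta's method. -/
theorem norm_hermite_defect_le (hu : HasBoundedDerivs 3 M u) (t : ℝ) (hh : 0 ≤ h) :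
    ‖(4 : ℝ) • u (t + h / 2) + u (t + h) - (5 : ℝ) • u t - h • deriv u t -
      (2 * h) • deriv u (t + h / 2)‖ ≤ 2 * M * h ^ 3 := by
  have hM := hu.bound_nonneg
  have hR := hu.norm_sub_taylor_two_le t hh
  have hR₁ := hu.norm_sub_taylor_two_le t (div_nonneg hh zero_le_two)
  have hR₂ := hu.deriv.norm_sub_taylor_one_le t (div_nonneg hh zero_le_two)
  set R := u (t + h) - _
  set R₁ := u (t + h / 2) - _
  set R₂ := deriv u (t + h / 2) - _
  calc _ = ‖(4 : ℝ) • R₁ + R - (2 * h) • R₂‖ := by congr 1; module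
    _ ≤ 4 * ‖R₁‖ + ‖R‖ + 2 * h * ‖R₂‖ := by
        grw [norm_sub_le, norm_add_le, norm_smul, norm_smul]
        simp [abs_of_nonneg hh]
    _ ≤ 4 * (M * (h / 2) ^ 3 / 2) + M * h ^ 3 / 2 + 2 * h * (M * (h / 2) ^ 2) := by gcongr
    _ = 5 / 4 * (M * h ^ 3) := by ring
    _ ≤ 2 * M * h ^ 3 := by linarith [show 0 ≤ M * h ^ 3 by positivity]

end HasBoundedDerivs

end Curves

section Kutta

variable {E : Type*} [NormedAddCommGroup E] [NormedSpace ℝ E]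

/-- The argument of the slope at the midpoint `t + h / 2` in Kutta's third-order method for
`u' = F (s, u)`, with step size `h` from the value `w` at time `t`. -/
noncomputable def kuttaStage₂ (F : ℝ × E → E) (t h : ℝ) (w : E) : E :=
  w + (h / 2) • F (t, w)

/-- The argument of the slope at the endpoint `t + h` in Kutta's third-order method for
`u' = F (s, u)`, with step size `h` from the value `w` at time `t`. -/
noncomputable def kuttaStage₃ (F : ℝ × E → E) (t h : ℝ) (w : E) : E :=
  w - h • F (t, w) + (2 * h) • F (t + h / 2, kuttaStage₂ F t h w)

/-- One step of Kutta's third-order method for `u' = F (s, u)`, with step size `h` from the value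
`w` at time `t`. -/
noncomputable def kuttaStep (F : ℝ × E → E) (t h : ℝ) (w : E) : E :=
  w + (h / 6) • (F (t, w) + (4 : ℝ) • F (t + h / 2, kuttaStage₂ F t h w) +
    F (t + h, kuttaStage₃ F t h w))

variable {F : ℝ × E → E} {u : ℝ → E} {K M t h : ℝ}

theorem HasBoundedDerivs.norm_apply_mk_sub_le {m : ℕ} (hF : HasBoundedDerivs (m + 1) K F)
    (s : ℝ) (a b : E) : ‖F (s, b) - F (s, a)‖ ≤ K * ‖b - a‖ := by
  simpa [Prod.norm_def] using hF.norm_sub_le (s, a) (s, b)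

theorem norm_kuttaStage₂_sub_le (hu : HasBoundedDerivs 2 M u) (hh : 0 ≤ h)
    (hode : deriv u t = F (t, u t)) :
    ‖kuttaStage₂ F t h (u t) - u (t + h / 2)‖ ≤ M * h ^ 2 / 4 := by
  rw [norm_sub_rev, kuttaStage₂, ← hode]
  exact (hu.norm_sub_taylor_one_le t (div_nonneg hh zero_le_two)).trans_eq (by ring)

theorem norm_four_smul_kuttaStage₂_sub_add_kuttaStage₃_sub_le (hF : HasBoundedDerivs 1 K F)
    (hu : HasBoundedDerivs 3 M u) (hh : 0 ≤ h) (hode : deriv u t = F (t, u t))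
    (hode_mid : deriv u (t + h / 2) = F (t + h / 2, u (t + h / 2))) :
    ‖(4 : ℝ) • (kuttaStage₂ F t h (u t) - u (t + h / 2)) +
      (kuttaStage₃ F t h (u t) - u (t + h))‖ ≤ (2 + K) * M * h ^ 3 := by
  have hK := hF.bound_nonneg
  have hM := hu.bound_nonneg
  have defect_le := hu.norm_hermite_defect_le t hh
  have slope_le : ‖F (t + h / 2, kuttaStage₂ F t h (u t)) - deriv u (t + h / 2)‖ ≤
      K * (M * h ^ 2 / 4) := by
    rw [hode_mid]
    grw [hF.norm_apply_mk_sub_le, norm_kuttaStage₂_sub_le (hu.of_le (by simp)) hh hode]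
  have split : (4 : ℝ) • (kuttaStage₂ F t h (u t) - u (t + h / 2)) +
      (kuttaStage₃ F t h (u t) - u (t + h)) =
      (2 * h) • (F (t + h / 2, kuttaStage₂ F t h (u t)) - deriv u (t + h / 2)) -
      ((4 : ℝ) • u (t + h / 2) + u (t + h) - (5 : ℝ) • u t - h • deriv u t -
        (2 * h) • deriv u (t + h / 2)) := by
    simp only [kuttaStage₃, hode]
    nth_rw 1 [kuttaStage₂]
    module
  calc _ ≤ 2 * h * (K * (M * h ^ 2 / 4)) + 2 * M * h ^ 3 := by
        rw [split]
        grw [norm_sub_le, norm_smul, slope_le, defect_le, Real.norm_of_nonneg (by positivity)]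
    _ = 2 * M * h ^ 3 + K * M * h ^ 3 / 2 := by ring
    _ ≤ (2 + K) * M * h ^ 3 := by linarith [show 0 ≤ K * M * h ^ 3 by positivity]

theorem norm_kuttaStage₃_sub_le (hF : HasBoundedDerivs 1 K F)
    (hu : HasBoundedDerivs 3 M u) (hh : 0 ≤ h) (hode : deriv u t = F (t, u t))
    (hode_mid : deriv u (t + h / 2) = F (t + h / 2, u (t + h / 2))) :
    ‖kuttaStage₃ F t h (u t) - u (t + h)‖ ≤ (2 + K) * M * h ^ 3 + M * h ^ 2 := by
  have combined_le :=
    norm_four_smul_kuttaStage₂_sub_add_kuttaStage₃_sub_le hF hu hh hode hode_mid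
  have stage₂_le := norm_kuttaStage₂_sub_le (hu.of_le (by simp)) hh hode
  set e₂ := kuttaStage₂ F t h (u t) - u (t + h / 2)
  set e₃ := kuttaStage₃ F t h (u t) - u (t + h)
  calc ‖e₃‖ = ‖((4 : ℝ) • e₂ + e₃) - (4 : ℝ) • e₂‖ := by rw [add_sub_cancel_left]
    _ ≤ (2 + K) * M * h ^ 3 + 4 * (M * h ^ 2 / 4) := by
        grw [norm_sub_le, norm_smul, combined_le, stage₂_le]
        simp
    _ = (2 + K) * M * h ^ 3 + M * h ^ 2 := by ring

theorem HasBoundedDerivs.norm_solution_point_sub_le {m : ℕ} (hu : HasBoundedDerivs (m + 1) M u)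
    (t : ℝ) (hh : 0 ≤ h) : ‖(t + h, u (t + h)) - (t, u t)‖ ≤ (1 + M) * h := by
  have hM := hu.bound_nonneg
  have increment_le : ‖u (t + h) - u t‖ ≤ M * h := by
    simpa [abs_of_nonneg hh] using hu.norm_sub_le t (t + h)
  rw [Prod.mk_sub_mk, norm_prod_le_iff, add_sub_cancel_left, Real.norm_of_nonneg hh]
  constructor <;> nlinarith

theorem norm_kutta_slope_error_le_of_le_one (hF : HasBoundedDerivs 2 K F)
    (hu : HasBoundedDerivs 3 M u) (hh : 0 ≤ h) (hh₁ : h ≤ 1) (hode : deriv u t = F (t, u t))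
    (hode_mid : deriv u (t + h / 2) = F (t + h / 2, u (t + h / 2))) :
    ‖(4 : ℝ) • (F (t + h / 2, kuttaStage₂ F t h (u t)) - F (t + h / 2, u (t + h / 2))) +
      (F (t + h, kuttaStage₃ F t h (u t)) - F (t + h, u (t + h)))‖ ≤
      4 * (K * M * (1 + M) * (3 + K) ^ 2) * h ^ 3 := by
  have hK := hF.bound_nonneg
  have hM := hu.bound_nonneg
  have stage₂_le := norm_kuttaStage₂_sub_le (hu.of_le (by simp)) hh hode
  have stage₃_le := norm_kuttaStage₃_sub_le (hF.of_le (by simp)) hu hh hode hode_mid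
  have combined_le := norm_four_smul_kuttaStage₂_sub_add_kuttaStage₃_sub_le
    (hF.of_le (by simp)) hu hh hode hode_mid
  have points_le := hu.norm_solution_point_sub_le (t + h / 2) (div_nonneg hh zero_le_two)
  rw [add_assoc, add_halves] at points_le
  have increments_le := hF.norm_smul_increment_add_increment_le 4 (t + h / 2, u (t + h / 2))
    (t + h, u (t + h)) (0, kuttaStage₂ F t h (u t) - u (t + h / 2))
    (0, kuttaStage₃ F t h (u t) - u (t + h))
  simp only [Prod.mk_add_mk, Prod.smul_mk, smul_zero, add_zero, add_sub_cancel, Prod.norm_mk,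
    norm_zero, norm_nonneg, sup_of_le_right, Nat.abs_ofNat] at increments_le
  have h_pow_three : h ^ 3 ≤ h ^ 2 := pow_le_pow_of_le_one hh hh₁ (by simp)
  have h_pow_four : h ^ 4 ≤ h ^ 3 := pow_le_pow_of_le_one hh hh₁ (by simp)
  have stage₃_quadratic : ‖kuttaStage₃ F t h (u t) - u (t + h)‖ ≤ (3 + K) * M * h ^ 2 := by
    grw [stage₃_le, h_pow_three]
    linarith
  grw [increments_le, points_le, combined_le, stage₂_le, stage₃_quadratic]
  calc _ = K * M * (M * h ^ 4 / 4 + (3 + K) ^ 2 * M * h ^ 4 + (2 + K) * h ^ 3 +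
        (1 + M) * (3 + K) * h ^ 3 / 2) := by ring
    _ ≤ K * M * (M * h ^ 3 / 4 + (3 + K) ^ 2 * M * h ^ 3 + (2 + K) * h ^ 3 +
        (1 + M) * (3 + K) * h ^ 3 / 2) := by gcongr
    _ = K * M * (M / 4 + (3 + K) ^ 2 * M + (2 + K) + (1 + M) * (3 + K) / 2) * h ^ 3 := by ring
    _ ≤ K * M * (4 * ((1 + M) * (3 + K) ^ 2)) * h ^ 3 := by
        gcongr
        nlinarith [mul_nonneg hM hK, mul_nonneg hM (sq_nonneg K)]
    _ = _ := by ring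

/-- For long steps `h²` is dominated by `h³`, so Lipschitz continuity suffices; this keeps the
constant independent of the length of the time interval. -/
theorem norm_kutta_slope_error_le_of_one_le (hF : HasBoundedDerivs 1 K F)
    (hu : HasBoundedDerivs 3 M u) (hh₁ : 1 ≤ h) (hode : deriv u t = F (t, u t))
    (hode_mid : deriv u (t + h / 2) = F (t + h / 2, u (t + h / 2))) :
    ‖(4 : ℝ) • (F (t + h / 2, kuttaStage₂ F t h (u t)) - F (t + h / 2, u (t + h / 2))) +
      (F (t + h, kuttaStage₃ F t h (u t)) - F (t + h, u (t + h)))‖ ≤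
      4 * (K * M * (1 + M) * (3 + K) ^ 2) * h ^ 3 := by
  have hK := hF.bound_nonneg
  have hM := hu.bound_nonneg
  have hh : 0 ≤ h := zero_le_one.trans hh₁
  have h_pow : h ^ 2 ≤ h ^ 3 := pow_le_pow_right₀ hh₁ (by simp)
  grw [norm_add_le, norm_smul, hF.norm_apply_mk_sub_le, hF.norm_apply_mk_sub_le,
    norm_kuttaStage₂_sub_le (hu.of_le (by simp)) hh hode,
    norm_kuttaStage₃_sub_le hF hu hh hode hode_mid, Real.norm_ofNat]
  calc 4 * (K * (M * h ^ 2 / 4)) + K * ((2 + K) * M * h ^ 3 + M * h ^ 2)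
      = K * M * (2 * h ^ 2 + (2 + K) * h ^ 3) := by ring
    _ ≤ K * M * (2 * h ^ 3 + (2 + K) * h ^ 3) := by gcongr
    _ = K * M * (4 + K) * h ^ 3 := by ring
    _ ≤ K * M * (4 * ((1 + M) * (3 + K) ^ 2)) * h ^ 3 := by
        gcongr
        nlinarith [mul_nonneg hM hK, mul_nonneg hM (sq_nonneg K)]
    _ = _ := by ring

theorem norm_sub_kuttaStep_le (hF : HasBoundedDerivs 2 K F) (hu : HasBoundedDerivs 4 M u)
    (hh : 0 ≤ h) (hode : ∀ s ∈ Set.Icc t (t + h), deriv u s = F (s, u s)) :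
    ‖u (t + h) - kuttaStep F t h (u t)‖ ≤ M * (1 + K * (1 + M) * (3 + K) ^ 2) * h ^ 4 := by
  have hK := hF.bound_nonneg
  have hM := hu.bound_nonneg
  have hode₁ := hode t ⟨le_rfl, by linarith⟩
  have hode₂ := hode (t + h / 2) ⟨by linarith, by linarith⟩
  have hode₃ := hode (t + h) ⟨by linarith, le_rfl⟩
  have simpson_le := hu.norm_sub_simpson_le t hh
  have slopes_le := (le_total h 1).elim
    (fun h_le => norm_kutta_slope_error_le_of_le_one hF (hu.of_le (by simp)) hh h_le hode₁ hode₂)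
    (fun le_h => norm_kutta_slope_error_le_of_one_le (hF.of_le (by simp)) (hu.of_le (by simp)) le_h
      hode₁ hode₂)
  rw [← hode₂, ← hode₃] at slopes_le
  set δ := (4 : ℝ) • (F (t + h / 2, kuttaStage₂ F t h (u t)) - deriv u (t + h / 2)) +
    (F (t + h, kuttaStage₃ F t h (u t)) - deriv u (t + h)) with hδ
  set S := u (t + h) - u t - _
  have split : u (t + h) - kuttaStep F t h (u t) = S - (h / 6) • δ := by
    simp only [kuttaStep, S, hδ, hode₁]
    module
  calc ‖u (t + h) - kuttaStep F t h (u t)‖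
      ≤ M * h ^ 4 + h / 6 * (4 * (K * M * (1 + M) * (3 + K) ^ 2) * h ^ 3) := by
        rw [split]
        grw [norm_sub_le, norm_smul, simpson_le, slopes_le, Real.norm_of_nonneg (by positivity)]
    _ ≤ M * (1 + K * (1 + M) * (3 + K) ^ 2) * h ^ 4 := by
        linarith [show 0 ≤ K * M * (1 + M) * (3 + K) ^ 2 * h ^ 4 by positivity]

end Kutta

section Advection

variable {X E G : Type*} [NormedAddCommGroup X] [NormedSpace ℝ X] [NormedAddCommGroup E]
  [NormedSpace ℝ E] [NormedAddCommGroup G] [NormedSpace ℝ G]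

/-- The position at time `s` of the point that moves with constant velocity `ω` and is at `x` at
time `a`; its graph is a characteristic line of `∂y/∂t + ω · ∂y/∂x`. -/
def characteristic (ω : X) (a : ℝ) (x : X) (s : ℝ) : X :=
  x + (s - a) • ω

theorem characteristic_eq_sub_add (ω : X) (a : ℝ) (x : X) (s : ℝ) :
    characteristic ω a x s = x - a • ω + s • ω := by
  rw [characteristic]
  module

theorem hasDerivAt_characteristic (ω : X) (a : ℝ) (x : X) (s : ℝ) :
    HasDerivAt (characteristic ω a x) ω s := by
  refine ((((hasDerivAt_id s).sub_const a).smul_const ω).const_add x).congr_deriv ?_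
  exact one_smul ℝ ω

theorem HasBoundedDerivs.exists_forall_comp_characteristic {m : ℕ} {B : ℝ} {y : ℝ × X → E}
    (hy : HasBoundedDerivs m B y) (ω : X) :
    ∃ M, ∀ a x, HasBoundedDerivs m M fun s => y (s, characteristic ω a x s) := by
  let graph : ℝ →L[ℝ] ℝ × X := .toSpanSingleton ℝ (1, ω)
  exact ⟨_, fun a x => by
    simpa [characteristic_eq_sub_add, graph] using hy.comp_const_add_clm (0, x - a • ω) graph⟩

theorem HasBoundedDerivs.exists_forall_comp_characteristic_prodMk {m : ℕ} {B : ℝ}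
    {f : ℝ → X → E → G} (hf : HasBoundedDerivs m B fun p : ℝ × X × E => f p.1 p.2.1 p.2.2)
    (ω : X) :
    ∃ K, ∀ a x, HasBoundedDerivs m K
      fun p : ℝ × E => f p.1 (characteristic ω a x p.1) p.2 := by
  let time : ℝ × E →L[ℝ] ℝ := .fst ℝ ℝ E
  let graph : ℝ × E →L[ℝ] ℝ × X × E := time.prod ((time.smulRight ω).prod (.snd ℝ ℝ E))
  exact ⟨_, fun a x => by
    simpa [characteristic_eq_sub_add, graph, time] using
      hf.comp_const_add_clm (0, x - a • ω, 0) graph⟩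

theorem deriv_comp_characteristic {y : ℝ × X → E} (hy : Differentiable ℝ y) (ω : X) (a : ℝ)
    (x : X) (s : ℝ) :
    deriv (fun s => y (s, characteristic ω a x s)) s =
      fderiv ℝ y (s, characteristic ω a x s) (1, ω) :=
  ((hy _).hasFDerivAt.comp_hasDerivAt s
    ((hasDerivAt_id s).prodMk (hasDerivAt_characteristic ω a x s))).deriv

theorem stmt_12_general {ω : X} {f : ℝ → X → E → E} {y : ℝ × X → E} {I : Set ℝ}
    (hf : ∃ B, HasBoundedDerivs 2 B fun p : ℝ × X × E => f p.1 p.2.1 p.2.2)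
    (hy : ∃ B, HasBoundedDerivs 4 B y)
    (hpde : ∀ t ∈ I, ∀ x, fderiv ℝ y (t, x) (1, ω) = f t x (y (t, x))) :
    ∃ C : ℝ, 0 ≤ C ∧ ∀ (t τ : ℝ) (x : X), 0 ≤ τ → Set.Icc t (t + τ) ⊆ I →
      let YD := y (t, x - τ • ω)
      let k₁ := f t (x - τ • ω) YD
      let k₂ := f (t + τ / 2) (x - (τ / 2) • ω) (YD + (τ / 2) • k₁)
      let k₃ := f (t + τ) x (YD - τ • k₁ + (2 * τ) • k₂)
      ‖y (t + τ, x) - YD - (τ / 6) • (k₁ + (4 : ℝ) • k₂ + k₃)‖ ≤ C * τ ^ 4 := by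
  obtain ⟨_, hf⟩ := hf
  obtain ⟨_, hy⟩ := hy
  obtain ⟨K, hF⟩ := hf.exists_forall_comp_characteristic_prodMk ω
  obtain ⟨M, hu⟩ := hy.exists_forall_comp_characteristic ω
  have hK := (hF 0 0).bound_nonneg
  have hM := (hu 0 0).bound_nonneg
  refine ⟨M * (1 + K * (1 + M) * (3 + K) ^ 2), by positivity, fun t τ x hτ hI => ?_⟩
  have departure : characteristic ω (t + τ) x t = x - τ • ω := by
    rw [characteristic]; module
  have midpoint : characteristic ω (t + τ) x (t + τ / 2) = x - (τ / 2) • ω := by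
    rw [characteristic]; module
  have arrival : characteristic ω (t + τ) x (t + τ) = x := by simp [characteristic]
  have step_le := norm_sub_kuttaStep_le (hF (t + τ) x) (hu (t + τ) x) hτ fun s hs =>
    (deriv_comp_characteristic hy.differentiable ω _ x s).trans (hpde s (hI hs) _)
  simpa only [kuttaStep, kuttaStage₃, kuttaStage₂, departure, midpoint, arrival,
    ← sub_sub] using step_le

end Advection

/-- Local truncation error of the semi-Lagrangian Runge–Kutta order-3 method
(Algorithm 3) for constant advection speed `ω`: if `f` is `C³` with bounded
derivatives up to order three and `y` is a `C⁴` solution of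
`∂y/∂t + ω ∂y/∂x = f(t,x,y)` on `[0,T] × ℝ` with bounded derivatives up to order
four, then there is `C ≥ 0` such that the one-step error of Kutta's third-order
step along the characteristic is at most `Cτ⁴`; i.e. the local truncation error is
`O(τ³)`. -/
theorem stmt_12 (n : ℕ) (T ω : ℝ) (hT : 0 < T)
    (f : ℝ → ℝ → (Fin n → ℝ) → (Fin n → ℝ))
    (hf : ContDiff ℝ 3 fun p : ℝ × ℝ × (Fin n → ℝ) => f p.1 p.2.1 p.2.2)
    (hfb : ∃ B : ℝ, ∀ j : ℕ, 1 ≤ j → j ≤ 3 → ∀ p : ℝ × ℝ × (Fin n → ℝ),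
      ‖iteratedFDeriv ℝ j (fun q : ℝ × ℝ × (Fin n → ℝ) => f q.1 q.2.1 q.2.2) p‖ ≤ B)
    (y : ℝ × ℝ → (Fin n → ℝ))
    (hy : ContDiff ℝ 4 y)
    (hyb : ∃ B : ℝ, ∀ j : ℕ, 1 ≤ j → j ≤ 4 → ∀ p : ℝ × ℝ,
      ‖iteratedFDeriv ℝ j y p‖ ≤ B)
    (hpde : ∀ t ∈ Set.Icc (0 : ℝ) T, ∀ x : ℝ,
      fderiv ℝ y (t, x) (1, ω) = f t x (y (t, x))) :
    ∃ C : ℝ, 0 ≤ C ∧ ∀ (t τ x : ℝ), 0 ≤ t → 0 ≤ τ → t + τ ≤ T →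
      let YD := y (t, x - ω * τ)
      let k₁ := f t (x - ω * τ) YD
      let k₂ := f (t + τ / 2) (x - ω * τ / 2) (YD + (τ / 2) • k₁)
      let k₃ := f (t + τ) x (YD - τ • k₁ + (2 * τ) • k₂)
      ‖y (t + τ, x) - YD - (τ / 6) • (k₁ + (4 : ℝ) • k₂ + k₃)‖ ≤ C * τ ^ 4 := by
  obtain ⟨Bf, hfb⟩ := hfb
  obtain ⟨By, hyb⟩ := hyb
  have hf₃ : HasBoundedDerivs 3 Bf fun p : ℝ × ℝ × (Fin n → ℝ) => f p.1 p.2.1 p.2.2 := ⟨hf, hfb⟩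
  obtain ⟨C, hC, error_le⟩ := stmt_12_general ⟨Bf, hf₃.of_le (by simp)⟩ ⟨By, hy, hyb⟩ hpde
  refine ⟨C, hC, fun t τ x ht hτ htT => ?_⟩
  simpa only [smul_eq_mul, mul_comm τ ω, div_mul_eq_mul_div] using
    error_le t τ x hτ (Set.Icc_subset_Icc ht htT)
end
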